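/- arXiv:1608.06423 — 2 statements merged into one kernel-verified Lean document; each statement's English description precedes it below -/
import Mathlib

section
/- Let ε > 0, let r be a real number, and let Q and m be positive real numbers satisfying πε ≤ e·m·√Q. Then for every complex number τ = x + iy with πε/(Qm²e) ≤ y ≤ e/(πε), one has T(y, ε/2) + T(y/(Qm²|τ − r|²), ε/2) ≥ 2·T(1/(m√Q), ε/2), and equality holds for τ = r + i/(m√Q). In other words, on this region the total number of terms needed to approximate the two integrals obtained by splitting the path from i∞ to the cusp r at the point τ is minimized by taking τ = r + i/(m√Q). -/
/-- The truncation bound `T(y, ε) = -log(2πyε)/(2πy)`. -/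
noncomputable def Tbound (y ε : ℝ) : ℝ := -Real.log (2 * Real.pi * y * ε) / (2 * Real.pi * y)

/-- The truncation bound in terms of the function `u ↦ u log u`. -/
lemma Tbound_half_eq_mul_log (y ε : ℝ) (hε : 0 < ε) :
    Tbound y (ε / 2) =
      ε / 2 * ((Real.pi * ε * y)⁻¹ * Real.log (Real.pi * ε * y)⁻¹) := by
  have hpi := Real.pi_ne_zero
  rw [Tbound, Real.log_inv, show 2 * Real.pi * y * (ε / 2) = Real.pi * ε * y by ring]
  rcases eq_or_ne y 0 with rfl | hy
  · simp
  · field_simp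

/-- The tangent line inequality for the convex function `u ↦ u log u`. -/
lemma mul_log_tangent_le {u c : ℝ} (hu : 0 < u) (hc : 0 < c) :
    c * Real.log c + (1 + Real.log c) * (u - c) ≤ u * Real.log u := by
  have h := Real.log_le_sub_one_of_pos (div_pos hc hu)
  rw [Real.log_div hc.ne' hu.ne'] at h
  have h' := mul_le_mul_of_nonneg_left h hu.le
  have e : u * (c / u - 1) = c - u := by field_simp
  linarith

/-- If the geometric mean of `u` and `v` is at least `c ≥ e⁻¹`, then
`u log u + v log v` is at least `2 c log c`. -/
lemma two_mul_mul_log_le_of_sq_le_mul {u v c : ℝ} (hu : 0 < u) (hv : 0 < v)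
    (hc : Real.exp (-1) ≤ c) (huv : c ^ 2 ≤ u * v) :
    2 * (c * Real.log c) ≤ u * Real.log u + v * Real.log v := by
  have hc0 : 0 < c := (Real.exp_pos _).trans_le hc
  have hlog : -1 ≤ Real.log c := (Real.le_log_iff_exp_le hc0).2 hc
  have hsum : 2 * c ≤ u + v :=
    abs_le_of_sq_le_sq' (by nlinarith [sq_nonneg (u - v)]) (by positivity) |>.2
  nlinarith [mul_log_tangent_le hu hc0, mul_log_tangent_le hv hc0,
    mul_nonneg (by linarith : 0 ≤ 1 + Real.log c) (sub_nonneg.2 hsum)]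

/-- Splitting the path from `i∞` to the cusp `r` at the point `τ = r + i/(m√Q)`
minimizes the total number of terms needed in the two sums. -/
theorem optimal_split_point (ε r Q m : ℝ) (hε : 0 < ε) (hQ : 0 < Q) (hm : 0 < m)
    (h : Real.pi * ε ≤ Real.exp 1 * m * Real.sqrt Q) :
    (∀ τ : ℂ, Real.pi * ε / (Q * m ^ 2 * Real.exp 1) ≤ τ.im →
      τ.im ≤ Real.exp 1 / (Real.pi * ε) →
      Tbound τ.im (ε / 2) +
        Tbound (τ.im / (Q * m ^ 2 * ‖τ - (r : ℂ)‖ ^ 2)) (ε / 2) ≥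
      2 * Tbound (1 / (m * Real.sqrt Q)) (ε / 2)) ∧
    (let τ₀ : ℂ := (r : ℂ) + Complex.I / ((m : ℂ) * (Real.sqrt Q : ℂ))
     Tbound τ₀.im (ε / 2) +
       Tbound (τ₀.im / (Q * m ^ 2 * ‖τ₀ - (r : ℂ)‖ ^ 2)) (ε / 2) =
     2 * Tbound (1 / (m * Real.sqrt Q)) (ε / 2)) := by
  have hpi := Real.pi_pos
  have hs : 0 < Real.sqrt Q := Real.sqrt_pos.2 hQ
  have hsq : Real.sqrt Q ^ 2 = Q := Real.sq_sqrt hQ.le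
  refine ⟨fun τ hlow _ => ?_, ?_⟩
  · have hy : 0 < τ.im := lt_of_lt_of_le (by positivity) hlow
    have hnorm : τ.im ^ 2 ≤ ‖τ - (r : ℂ)‖ ^ 2 := by
      have := Complex.abs_im_le_norm (τ - (r : ℂ))
      simp only [Complex.sub_im, Complex.ofReal_im, sub_zero] at this
      exact sq_le_sq' (by linarith [norm_nonneg (τ - (r : ℂ))])
        ((le_abs_self _).trans this)
    set N := ‖τ - (r : ℂ)‖ ^ 2
    have hN : 0 < N := (pow_pos hy 2).trans_le hnorm
    simp only [Tbound_half_eq_mul_log _ _ hε, ge_iff_le]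
    rw [← mul_add, mul_left_comm]
    refine mul_le_mul_of_nonneg_left
      (two_mul_mul_log_le_of_sq_le_mul (by positivity) (by positivity) ?_ ?_) (by positivity)
    · rw [Real.exp_neg]
      apply inv_anti₀ (by positivity)
      rw [mul_one_div, div_le_iff₀ (by positivity)]
      linarith
    · have hleft : (Real.pi * ε * (1 / (m * Real.sqrt Q)))⁻¹ ^ 2 =
          Q * m ^ 2 / (Real.pi * ε) ^ 2 := by
        rw [mul_one_div, inv_div, div_pow, mul_pow, hsq, mul_comm Q]
      have hright : (Real.pi * ε * τ.im)⁻¹ * (Real.pi * ε * (τ.im / (Q * m ^ 2 * N)))⁻¹ =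
          Q * m ^ 2 / (Real.pi * ε) ^ 2 * (N / τ.im ^ 2) := by
        field_simp
      rw [hleft, hright]
      exact le_mul_of_one_le_right (by positivity) ((one_le_div (by positivity)).2 hnorm)
  · intro τ₀
    have hτ : τ₀ - (r : ℂ) = ((1 / (m * Real.sqrt Q) : ℝ) : ℂ) * Complex.I := by
      simp only [τ₀]
      push_cast
      ring
    have him : τ₀.im = 1 / (m * Real.sqrt Q) := by
      simpa using congrArg Complex.im hτ
    have hspeed : τ₀.im / (Q * m ^ 2 * ‖τ₀ - (r : ℂ)‖ ^ 2) = 1 / (m * Real.sqrt Q) := by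
      have hunit : Q * m ^ 2 * (1 / (m * Real.sqrt Q)) ^ 2 = 1 := by
        rw [div_pow, mul_pow, hsq]
        field_simp
      rw [hτ, norm_mul, Complex.norm_I, mul_one, Complex.norm_real, Real.norm_eq_abs, sq_abs,
        hunit, div_one, him]
    rw [hspeed, him, two_mul]
end

section
/- Let r and r' be distinct real numbers and let c > 0. For every complex number τ = x + iy with y > 0 satisfying |τ − r| = c·|τ − r'|, one has y/|τ − r|² ≤ 1/(c·|r − r'|). Moreover the point τ₀ = x₀ + iy₀ with x₀ = (c²r' + r)/(c² + 1) and y₀ = c·|r' − r|/(c² + 1) satisfies |τ₀ − r| = c·|τ₀ − r'| and attains equality: y₀/|τ₀ − r|² = 1/(c·|r − r'|). -/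
/-- The triangle with vertices `τ`, `r`, `r'` has base `|r - r'|` and height `|Im τ|`, so twice its
area is at most the product of the other two sides. -/
theorem abs_im_mul_abs_sub_le_norm_mul_norm (τ : ℂ) (r r' : ℝ) :
    |τ.im| * |r - r'| ≤ ‖τ - (r : ℂ)‖ * ‖τ - (r' : ℂ)‖ := by
  have h := Complex.abs_im_le_norm ((τ - r) * (starRingEnd ℂ) (τ - r'))
  rw [norm_mul, Complex.norm_conj] at h
  have him : ((τ - r) * (starRingEnd ℂ) (τ - r')).im = τ.im * (r - r') := by
    simp
    ring
  rwa [him, abs_mul] at h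

/-- The squared distance from `x + iy` to a real point. -/
theorem norm_add_mul_I_sub_ofReal_sq (x y r : ℝ) :
    ‖(x : ℂ) + (y : ℂ) * Complex.I - (r : ℂ)‖ ^ 2 = (x - r) ^ 2 + y ^ 2 := by
  rw [Complex.sq_norm, Complex.normSq_apply]
  simp
  ring

/-- On the circle `|τ - r| = c·|τ - r'|` the quantity `Im(τ)/|τ - r|²` is at
most `1/(c·|r - r'|)`, with equality at the stated point `τ₀`. -/
theorem optimal_point_on_circle (r r' : ℝ) (hrr : r ≠ r') (c : ℝ) (hc : 0 < c) :
    (∀ τ : ℂ, 0 < τ.im → ‖τ - (r : ℂ)‖ = c * ‖τ - (r' : ℂ)‖ →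
      τ.im / ‖τ - (r : ℂ)‖ ^ 2 ≤ 1 / (c * |r - r'|)) ∧
    (let τ₀ : ℂ := (((c ^ 2 * r' + r) / (c ^ 2 + 1) : ℝ) : ℂ) +
      ((c * |r' - r| / (c ^ 2 + 1) : ℝ) : ℂ) * Complex.I
     ‖τ₀ - (r : ℂ)‖ = c * ‖τ₀ - (r' : ℂ)‖ ∧
     τ₀.im / ‖τ₀ - (r : ℂ)‖ ^ 2 = 1 / (c * |r - r'|)) := by
  have hd : 0 < |r - r'| := abs_pos.mpr (sub_ne_zero.mpr hrr)
  refine ⟨fun τ hτ h => ?_, ?_⟩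
  · have hN : 0 < ‖τ - (r : ℂ)‖ := norm_pos_iff.mpr fun h0 => by
      have := congrArg Complex.im h0
      simp at this
      exact hτ.ne' this
    rw [div_le_div_iff₀ (by positivity) (by positivity)]
    have key := abs_im_mul_abs_sub_le_norm_mul_norm τ r r'
    rw [abs_of_pos hτ] at key
    calc τ.im * (c * |r - r'|) = c * (τ.im * |r - r'|) := by ring
      _ ≤ c * (‖τ - (r : ℂ)‖ * ‖τ - (r' : ℂ)‖) := by gcongr
      _ = ‖τ - (r : ℂ)‖ * (c * ‖τ - (r' : ℂ)‖) := by ring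
      _ = 1 * ‖τ - (r : ℂ)‖ ^ 2 := by rw [← h]; ring
  · intro τ₀
    have hsq : |r - r'| ^ 2 = (r - r') ^ 2 := sq_abs _
    have hr : ‖τ₀ - (r : ℂ)‖ ^ 2 = c ^ 2 * |r - r'| ^ 2 / (c ^ 2 + 1) := by
      rw [norm_add_mul_I_sub_ofReal_sq, abs_sub_comm r' r, div_pow, mul_pow, hsq]
      field_simp
      ring
    have hr' : ‖τ₀ - (r' : ℂ)‖ ^ 2 = |r - r'| ^ 2 / (c ^ 2 + 1) := by
      rw [norm_add_mul_I_sub_ofReal_sq, abs_sub_comm r' r, div_pow, mul_pow, hsq]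
      field_simp
      ring
    have him : τ₀.im = c * |r - r'| / (c ^ 2 + 1) := by
      rw [abs_sub_comm r r']
      simp only [τ₀, Complex.add_im, Complex.ofReal_im, Complex.im_ofReal_mul, Complex.I_im,
        mul_one, zero_add]
    refine ⟨?_, ?_⟩
    · rw [← sq_eq_sq₀ (norm_nonneg _) (by positivity), mul_pow, hr, hr']
      ring
    · rw [him, hr]
      field_simp
end
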